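/- Let 𝔤 be a real Lie algebra with an algebraic Cartan decomposition 𝔤 = 𝔨 ⊕ 𝔭. If W ⊆ 𝔭 is a Lie triple system, then the sum W + Z_𝔭(W) is again a Lie triple system in 𝔭, where Z_𝔭(W) = {z ∈ 𝔭 : ⁅w,z⁆ = 0 for all w ∈ W}. (This is the construction used in the proofs of Lemmas 4.4 and 4.5 of the paper to produce Lie triple systems containing a given maximal one.) -/

import Mathlib

/-!
By the Cartan relations `𝔭` is a Lie triple system, and so is the centralizer of `W`, being a Lie
subalgebra; hence so is their intersection `Z`. Since `⁅W, Z⁆ = 0`, each of `W` and `Z` lies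
in the centralizer of the other; as centralizers are closed under the bracket, all mixed terms of a
triple bracket on `W ⊔ Z` vanish.
-/

section LieTripleSystem

variable {R L : Type*} [CommRing R] [LieRing L] [LieAlgebra R L]

theorem lie_eq_zero_comm {x y : L} : ⁅x, y⁆ = 0 ↔ ⁅y, x⁆ = 0 := by
  rw [← lie_skew, neg_eq_zero]

variable (R) in
/-- The centralizer of a subset of a Lie algebra, as a Lie subalgebra. The paper's `Z_𝔭(W)`
is `𝔭 ⊓ lieCentralizer ℝ W`. -/
def lieCentralizer (S : Set L) : LieSubalgebra R L where
  carrier := {z | ∀ w ∈ S, ⁅w, z⁆ = 0}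
  zero_mem' w _ := lie_zero w
  add_mem' hx hy w hw := by rw [lie_add, hx w hw, hy w hw, add_zero]
  smul_mem' c x hx w hw := by rw [lie_smul, hx w hw, smul_zero]
  lie_mem' hx hy w hw := by rw [leibniz_lie, hx w hw, hy w hw, zero_lie, lie_zero, add_zero]

theorem subset_lieCentralizer_comm {S T : Set L} :
    S ⊆ lieCentralizer R T ↔ T ⊆ lieCentralizer R S :=
  ⟨fun h _ ht _ hs => lie_eq_zero_comm.mp (h hs _ ht),
    fun h _ hs _ ht => lie_eq_zero_comm.mp (h ht _ hs)⟩

/-- A Lie triple system in a Lie algebra: a submodule closed under the triple bracket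
`⁅⁅x, y⁆, z⁆`. -/
def IsLieTripleSystem (V : Submodule R L) : Prop :=
  ∀ x ∈ V, ∀ y ∈ V, ∀ z ∈ V, ⁅⁅x, y⁆, z⁆ ∈ V

namespace IsLieTripleSystem

variable {V W : Submodule R L}

theorem of_lie_mem {K P : Submodule R L} (hKP : ∀ x ∈ K, ∀ y ∈ P, ⁅x, y⁆ ∈ P)
    (hPP : ∀ x ∈ P, ∀ y ∈ P, ⁅x, y⁆ ∈ K) : IsLieTripleSystem P :=
  fun x hx y hy z hz => hKP _ (hPP x hx y hy) z hz

theorem of_lieSubalgebra (H : LieSubalgebra R L) : IsLieTripleSystem H.toSubmodule :=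
  fun _ hx _ hy _ hz => H.lie_mem (H.lie_mem hx hy) hz

theorem inf (hV : IsLieTripleSystem V) (hW : IsLieTripleSystem W) : IsLieTripleSystem (V ⊓ W) :=
  fun x hx y hy z hz => ⟨hV x hx.1 y hy.1 z hz.1, hW x hx.2 y hy.2 z hz.2⟩

theorem sup_of_subset_lieCentralizer (hV : IsLieTripleSystem V) (hW : IsLieTripleSystem W)
    (hWV : (W : Set L) ⊆ lieCentralizer R (V : Set L)) : IsLieTripleSystem (V ⊔ W) := by
  have hVW : (V : Set L) ⊆ lieCentralizer R (W : Set L) := subset_lieCentralizer_comm.mp hWV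
  intro x hx y hy z hz
  obtain ⟨v₁, hv₁, w₁, hw₁, rfl⟩ := Submodule.mem_sup.mp hx
  obtain ⟨v₂, hv₂, w₂, hw₂, rfl⟩ := Submodule.mem_sup.mp hy
  obtain ⟨v₃, hv₃, w₃, hw₃, rfl⟩ := Submodule.mem_sup.mp hz
  have lie_vw : ⁅v₁, w₂⁆ = 0 := hWV hw₂ v₁ hv₁
  have lie_wv : ⁅w₁, v₂⁆ = 0 := hVW hv₂ w₁ hw₁
  have lie_vv_w : ⁅⁅v₁, v₂⁆, w₃⁆ = 0 :=
    lie_eq_zero_comm.mp ((lieCentralizer R (W : Set L)).lie_mem (hVW hv₁) (hVW hv₂) w₃ hw₃)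
  have lie_ww_v : ⁅⁅w₁, w₂⁆, v₃⁆ = 0 :=
    lie_eq_zero_comm.mp ((lieCentralizer R (V : Set L)).lie_mem (hWV hw₁) (hWV hw₂) v₃ hv₃)
  have triple_bracket :
      ⁅⁅v₁ + w₁, v₂ + w₂⁆, v₃ + w₃⁆ = ⁅⁅v₁, v₂⁆, v₃⁆ + ⁅⁅w₁, w₂⁆, w₃⁆ := by
    simp only [add_lie, lie_add, lie_vw, lie_wv, lie_vv_w, lie_ww_v, add_zero, zero_add]
  rw [triple_bracket]
  exact Submodule.add_mem_sup (hV v₁ hv₁ v₂ hv₂ v₃ hv₃) (hW w₁ hw₁ w₂ hw₂ w₃ hw₃)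

end IsLieTripleSystem

theorem sup_centralizer_is_lieTripleSystem_general {P W : Submodule R L}
    (hP : IsLieTripleSystem P) (hWP : W ≤ P) (hW : IsLieTripleSystem W) :
    W ⊔ P ⊓ (lieCentralizer R (W : Set L)).toSubmodule ≤ P ∧
      IsLieTripleSystem (W ⊔ P ⊓ (lieCentralizer R (W : Set L)).toSubmodule) :=
  ⟨sup_le hWP inf_le_left,
    hW.sup_of_subset_lieCentralizer (hP.inf (.of_lieSubalgebra _)) fun _ hz => hz.2⟩

end LieTripleSystem

/-- Let `𝔤` be a real Lie algebra with an algebraic Cartan decomposition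
`𝔤 = 𝔨 ⊕ 𝔭`.  If `W ⊆ 𝔭` is a Lie triple system, then the sum `W + Z_𝔭(W)` is again a
Lie triple system in `𝔭`, where `Z_𝔭(W) = {z ∈ 𝔭 : ⁅w,z⁆ = 0 for all w ∈ W}`. -/
theorem sup_centralizer_is_lieTripleSystem
    (g : Type*) [LieRing g] [LieAlgebra ℝ g]
    (𝔨 𝔭 : Submodule ℝ g)
    (hcompl : IsCompl 𝔨 𝔭)
    (hkk : ∀ x ∈ 𝔨, ∀ y ∈ 𝔨, ⁅x, y⁆ ∈ 𝔨)
    (hkp : ∀ x ∈ 𝔨, ∀ y ∈ 𝔭, ⁅x, y⁆ ∈ 𝔭)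
    (hpp : ∀ x ∈ 𝔭, ∀ y ∈ 𝔭, ⁅x, y⁆ ∈ 𝔨)
    (W : Submodule ℝ g) (hW𝔭 : W ≤ 𝔭)
    (hW : ∀ x ∈ W, ∀ y ∈ W, ∀ z ∈ W, ⁅⁅x, y⁆, z⁆ ∈ W)
    (Z : Submodule ℝ g)
    (hZ : (Z : Set g) = {z : g | z ∈ 𝔭 ∧ ∀ w ∈ W, ⁅w, z⁆ = 0}) :
    W ⊔ Z ≤ 𝔭 ∧ ∀ x ∈ W ⊔ Z, ∀ y ∈ W ⊔ Z, ∀ z ∈ W ⊔ Z, ⁅⁅x, y⁆, z⁆ ∈ W ⊔ Z := by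
  obtain rfl : Z = 𝔭 ⊓ (lieCentralizer ℝ (W : Set g)).toSubmodule := SetLike.coe_injective hZ
  exact sup_centralizer_is_lieTripleSystem_general (.of_lie_mem hkp hpp) hW𝔭 hW
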